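/- Let a and d be positive integers with d ≥ 4, 1 ≤ a < d + 3, and gcd(a, d + 3) = 1. Then q_d^{(a)}(n) − Q_d^{(a)}(n) tends to +∞ as n → ∞; that is, for every M there exists N such that for all n ≥ N, q_d^{(a)}(n) ≥ Q_d^{(a)}(n) + M. -/

import Mathlib

/-- `q_d^{(a)}(n)`: the number of partitions of `n` into parts of size at least `a`
such that successive parts differ by at least `d`. -/
noncomputable def gapCount (d a n : ℕ) : ℕ :=
  Nat.card {p : n.Partition //
    (∀ x ∈ p.parts, a ≤ x) ∧
    List.Chain' (fun x y => x + d ≤ y) (p.parts.sort (· ≤ ·))}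

/-- `Q_d^{(a)}(n)`: the number of partitions of `n` into parts congruent to `a` or `-a`
modulo `d + 3`. -/
noncomputable def congCount (d a n : ℕ) : ℕ :=
  Nat.card {p : n.Partition //
    ∀ x ∈ p.parts, x ≡ a [MOD d + 3] ∨ x + a ≡ 0 [MOD d + 3]}

/-- `Q_d^{(a,-)}(n)`: as `congCount`, but no part equals `d + 3 - a`. -/
noncomputable def congMinusCount (d a n : ℕ) : ℕ :=
  Nat.card {p : n.Partition //
    (∀ x ∈ p.parts, x ≡ a [MOD d + 3] ∨ x + a ≡ 0 [MOD d + 3]) ∧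
    ∀ x ∈ p.parts, x ≠ d + 3 - a}

/-- `Q_d^{(a,-,-)}(n)`: as `congCount`, but no part equals `a` or `d + 3 - a`. -/
noncomputable def congMinusMinusCount (d a n : ℕ) : ℕ :=
  Nat.card {p : n.Partition //
    (∀ x ∈ p.parts, x ≡ a [MOD d + 3] ∨ x + a ≡ 0 [MOD d + 3]) ∧
    (∀ x ∈ p.parts, x ≠ a) ∧ ∀ x ∈ p.parts, x ≠ d + 3 - a}

/-- `ρ(R; n)`: the number of partitions of `n` all of whose parts lie in `R`. -/
noncomputable def rhoCount (R : Set ℕ) (n : ℕ) : ℕ :=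
  Nat.card {p : n.Partition // ∀ x ∈ p.parts, x ∈ R}

/-- `h_n^{(a)}`: the least nonnegative residue of `-n` modulo `a`,
so that `n + negRes n a = a * ⌈n/a⌉`. -/
def negRes (n a : ℕ) : ℕ := (a - n % a) % a

/-- `⌈d/a⌉` for natural numbers. -/
def cdiv (d a : ℕ) : ℕ := (d + a - 1) / a

theorem add_pow_succ_le (b c k : ℕ) :
    (b + c) ^ (k + 1) ≤ b ^ (k + 1) + (k + 1) * c * (b + c) ^ k := by
  induction k with
  | zero => simp
  | succ k ih =>
    have h := Nat.mul_le_mul_left b ih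
    have h' : b * (b + c) ^ k ≤ (b + c) ^ (k + 1) := by
      rw [pow_succ']
      exact Nat.mul_le_mul_right _ (Nat.le_add_right b c)
    have h'' := Nat.mul_le_mul_left ((k + 1) * c) h'
    calc (b + c) ^ (k + 1 + 1) = b * (b + c) ^ (k + 1) + c * (b + c) ^ (k + 1) := by ring
      _ ≤ b * (b ^ (k + 1) + (k + 1) * c * (b + c) ^ k) + c * (b + c) ^ (k + 1) := by gcongr
      _ = b ^ (k + 1 + 1) + (k + 1) * c * (b * (b + c) ^ k) + c * (b + c) ^ (k + 1) := by ring
      _ ≤ b ^ (k + 1 + 1) + (k + 1) * c * (b + c) ^ (k + 1) + c * (b + c) ^ (k + 1) := by gcongr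
      _ = b ^ (k + 1 + 1) + (k + 1 + 1) * c * (b + c) ^ (k + 1) := by ring

/-- There are at least `N ^ k / ((k + 1)! k!)` lists of `k + 1` parts, all at least `a` and with
successive gaps at least `d`, whose sum exceeds the least possible one by `N`. -/
theorem exists_finset_gap_lists (d k : ℕ) : ∀ N a n : ℕ,
    n = N + (k + 1) * a + d * (k + 1).choose 2 →
    ∃ S : Finset (List ℕ), N ^ k ≤ S.card * ((k + 1).factorial * k.factorial) ∧
      ∀ l ∈ S, l.IsChain (fun x y => x + d ≤ y) ∧ (∀ x ∈ l, a ≤ x) ∧ l.sum = n := by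
  induction k with
  | zero =>
    intro N a n hn
    refine ⟨{[n]}, by simp, ?_⟩
    simp only [Finset.mem_singleton, forall_eq]
    refine ⟨List.isChain_singleton _, ?_, by simp⟩
    simp at hn ⊢
    omega
  | succ k ih =>
    intro N
    have hch : (k + 2).choose 2 = (k + 1) + (k + 1).choose 2 := by
      rw [Nat.choose_succ_succ' (k + 1) 1, Nat.choose_one_right]
    have hfac : (k + 1 + 1).factorial * (k + 1).factorial
        = ((k + 2) * (k + 1)) * ((k + 1).factorial * k.factorial) := by
      rw [Nat.factorial_succ (k + 1), Nat.factorial_succ k]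
      ring
    induction N using Nat.strong_induction_on with
    | _ N ihN =>
      intro a n hn
      obtain ⟨S, hS, hSl⟩ := ih N (a + d) (n - a) (by
        have : n = (N + (k + 1) * (a + d) + d * (k + 1).choose 2) + a := by
          rw [hn, hch]; ring
        omega)
      have han : a ≤ n := by
        rw [hn]
        nlinarith [Nat.zero_le N, Nat.zero_le (d * (k + 1 + 1).choose 2), Nat.zero_le (k * a)]
      have hinj : Function.Injective (List.cons a) := List.cons_injective
      have hcons : ∀ l ∈ S.map ⟨List.cons a, hinj⟩,
          l.IsChain (fun x y => x + d ≤ y) ∧ (∀ x ∈ l, a ≤ x) ∧ l.sum = n := by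
        intro l hl
        obtain ⟨l', hl', rfl⟩ := Finset.mem_map.1 hl
        obtain ⟨h1, h2, h3⟩ := hSl l' hl'
        refine ⟨List.isChain_cons.2 ⟨fun y hy => h2 y (List.mem_of_mem_head? hy), h1⟩, ?_, ?_⟩
        · intro x hx
          rcases List.mem_cons.1 hx with rfl | hx
          · exact le_rfl
          · exact (Nat.le_add_right a d).trans (h2 x hx)
        · simp only [Function.Embedding.coeFn_mk, List.sum_cons, h3]
          omega
      rcases lt_or_ge N (k + 2) with hN | hN
      · refine ⟨S.map ⟨List.cons a, hinj⟩, ?_, hcons⟩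
        rw [Finset.card_map, hfac]
        have : N ≤ (k + 2) * (k + 1) := by nlinarith
        calc N ^ (k + 1) = N * N ^ k := by ring
          _ ≤ (k + 2) * (k + 1) * (S.card * ((k + 1).factorial * k.factorial)) :=
            Nat.mul_le_mul this hS
          _ = _ := by ring
      · obtain ⟨N', rfl⟩ := Nat.exists_eq_add_of_le' hN
        obtain ⟨T, hT, hTl⟩ := ihN N' (by omega) (a + 1) n (by rw [hn]; ring)
        have hdisj : Disjoint (S.map ⟨List.cons a, hinj⟩) T := by
          rw [Finset.disjoint_left]
          intro l hl hlT
          obtain ⟨l', hl', rfl⟩ := Finset.mem_map.1 hl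
          have := (hTl _ hlT).2.1 a (by simp)
          omega
        refine ⟨(S.map ⟨List.cons a, hinj⟩).disjUnion T hdisj, ?_, ?_⟩
        · rw [Finset.card_disjUnion, Finset.card_map, add_mul]
          calc (N' + (k + 2)) ^ (k + 1)
              ≤ N' ^ (k + 1) + (k + 1) * (k + 2) * (N' + (k + 2)) ^ k := add_pow_succ_le _ _ _
            _ ≤ T.card * ((k + 1 + 1).factorial * (k + 1).factorial) + (k + 1) * (k + 2) *
                (S.card * ((k + 1).factorial * k.factorial)) :=
              add_le_add hT (Nat.mul_le_mul_left _ hS)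
            _ = _ := by rw [hfac]; ring
        · intro l hl
          rcases Finset.mem_disjUnion.1 hl with hl | hl
          · exact hcons l hl
          · obtain ⟨h1, h2, h3⟩ := hTl l hl
            exact ⟨h1, fun x hx => (Nat.le_succ a).trans (h2 x hx), h3⟩

theorem sort_coe_of_isChain {d : ℕ} {l : List ℕ} (hl : l.IsChain (fun x y => x + d ≤ y)) :
    Multiset.sort (l : Multiset ℕ) (· ≤ ·) = l := by
  have hl' : l.Pairwise (· ≤ ·) :=
    List.isChain_iff_pairwise.1 (hl.imp fun x y h => (Nat.le_add_right x d).trans h)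
  exact List.Perm.eq_of_pairwise' (Multiset.pairwise_sort _ _) hl'
    (Multiset.coe_eq_coe.1 (Multiset.sort_eq _ _))

/-- A set of gap lists with sum `n` has at most `gapCount d a n` elements. -/
theorem card_le_gapCount {d a n : ℕ} (ha : 1 ≤ a) (S : Finset (List ℕ))
    (hS : ∀ l ∈ S, l.IsChain (fun x y => x + d ≤ y) ∧ (∀ x ∈ l, a ≤ x) ∧ l.sum = n) :
    S.card ≤ gapCount d a n := by
  rw [gapCount, ← Nat.card_eq_finsetCard S]
  let f : S → {p : n.Partition // (∀ x ∈ p.parts, a ≤ x) ∧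
      List.IsChain (fun x y => x + d ≤ y) (p.parts.sort (· ≤ ·))} := fun l =>
    ⟨⟨(l.1 : Multiset ℕ), fun {i} hi => ha.trans ((hS l.1 l.2).2.1 i hi),
        by simpa using (hS l.1 l.2).2.2⟩,
      fun x hx => (hS l.1 l.2).2.1 x hx,
      by simpa only [sort_coe_of_isChain (hS l.1 l.2).1] using (hS l.1 l.2).1⟩
  refine Nat.card_le_card_of_injective f fun l l' h => Subtype.ext ?_
  have h' : ((l.1 : List ℕ) : Multiset ℕ) = (l'.1 : List ℕ) :=
    congrArg (fun p => p.1.parts) h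
  rw [← sort_coe_of_isChain (hS l.1 l.2).1, h', sort_coe_of_isChain (hS l'.1 l'.2).1]

theorem pow_le_gapCount_mul {d a : ℕ} (ha : 1 ≤ a) (N k : ℕ) :
    N ^ k ≤ gapCount d a (N + (k + 1) * a + d * (k + 1).choose 2) *
      ((k + 1).factorial * k.factorial) := by
  obtain ⟨S, hS, hSl⟩ := exists_finset_gap_lists d k N a _ rfl
  exact hS.trans (Nat.mul_le_mul_right _ (card_le_gapCount ha S hSl))

theorem sum_neg_log_one_sub_pow_le {y : ℝ} (hy0 : 0 < y) (hy1 : y < 1) (n : ℕ) :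
    ∑ i ∈ Finset.range n, -Real.log (1 - y ^ (i + 1)) ≤ Real.pi ^ 2 / 6 * (y / (1 - y)) := by
  have hlog : HasSum (fun k : ℕ => ∑ i ∈ Finset.range n, (y ^ (i + 1)) ^ (k + 1) / ((k : ℝ) + 1))
      (∑ i ∈ Finset.range n, -Real.log (1 - y ^ (i + 1))) := by
    refine hasSum_sum fun i _ => Real.hasSum_pow_div_log_of_abs_lt_one ?_
    rw [abs_of_pos (pow_pos hy0 _)]
    exact pow_lt_one₀ hy0.le hy1 (Nat.succ_ne_zero i)
  have hzeta : HasSum (fun k : ℕ => 1 / ((k + 1 : ℕ) : ℝ) ^ 2) (Real.pi ^ 2 / 6) := by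
    simpa using (hasSum_nat_add_iff' (f := fun k : ℕ => 1 / (k : ℝ) ^ 2) 1).2 hasSum_zeta_two
  refine hasSum_le (fun k => ?_) hlog (hzeta.mul_right (y / (1 - y)))
  have hk : (0 : ℝ) < (k : ℝ) + 1 := by positivity
  have hz0 : 0 < y ^ (k + 1) := pow_pos hy0 _
  have hz1 : y ^ (k + 1) < 1 := pow_lt_one₀ hy0.le hy1 (Nat.succ_ne_zero k)
  have hy : 0 < 1 - y := sub_pos.2 hy1
  have hz : 0 < 1 - y ^ (k + 1) := sub_pos.2 hz1
  have hgeom : ∑ i ∈ Finset.range n, (y ^ (i + 1)) ^ (k + 1)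
      ≤ y ^ (k + 1) / (1 - y ^ (k + 1)) := by
    have h := geom_sum_mul_neg (y ^ (k + 1)) n
    rw [le_div_iff₀ hz]
    calc (∑ i ∈ Finset.range n, (y ^ (i + 1)) ^ (k + 1)) * (1 - y ^ (k + 1))
        = y ^ (k + 1) * ((∑ i ∈ Finset.range n, (y ^ (k + 1)) ^ i) * (1 - y ^ (k + 1))) := by
          rw [← mul_assoc, Finset.mul_sum]
          congr 1
          refine Finset.sum_congr rfl fun i _ => ?_
          rw [← pow_succ', ← pow_mul, ← pow_mul, mul_comm]
      _ = y ^ (k + 1) * (1 - (y ^ (k + 1)) ^ n) := by rw [h]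
      _ ≤ y ^ (k + 1) * 1 := by
          gcongr
          linarith [pow_pos hz0 n]
      _ = y ^ (k + 1) := mul_one _
  have hle : ((k : ℝ) + 1) * y ^ k ≤ ∑ i ∈ Finset.range (k + 1), y ^ i := by
    have h := Finset.card_nsmul_le_sum (Finset.range (k + 1)) (fun i => y ^ i) (y ^ k)
      fun i hi => pow_le_pow_of_le_one hy0.le hy1.le (Nat.lt_succ_iff.1 (Finset.mem_range.1 hi))
    simpa using h
  have hquot : y ^ (k + 1) / (1 - y ^ (k + 1)) ≤ 1 / ((k : ℝ) + 1) * (y / (1 - y)) := by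
    rw [one_div_mul_eq_div, div_div, div_le_div_iff₀ hz (by positivity),
      ← geom_sum_mul_neg y (k + 1)]
    calc y ^ (k + 1) * ((1 - y) * ((k : ℝ) + 1))
        = (y * (1 - y)) * (((k : ℝ) + 1) * y ^ k) := by ring
      _ ≤ (y * (1 - y)) * ∑ i ∈ Finset.range (k + 1), y ^ i := by gcongr
      _ = _ := by ring
  calc ∑ i ∈ Finset.range n, (y ^ (i + 1)) ^ (k + 1) / ((k : ℝ) + 1)
      = (∑ i ∈ Finset.range n, (y ^ (i + 1)) ^ (k + 1)) / ((k : ℝ) + 1) :=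
        (Finset.sum_div _ _ _).symm
    _ ≤ (1 / ((k : ℝ) + 1) * (y / (1 - y))) / ((k : ℝ) + 1) := by
        gcongr
        exact hgeom.trans hquot
    _ = 1 / ((k + 1 : ℕ) : ℝ) ^ 2 * (y / (1 - y)) := by
        push_cast
        field_simp

/-- The generating function bound for the number of partitions with parts in a finite set. -/
theorem card_partition_mul_pow_le {x : ℝ} (hx0 : 0 < x) (hx1 : x < 1) (n : ℕ) (T : Finset ℕ)
    (hT : ∀ j ∈ T, 1 ≤ j) :
    (Nat.card {p : n.Partition // ∀ j ∈ p.parts, j ∈ T} : ℝ) * x ^ n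
      ≤ ∏ j ∈ T, (1 - x ^ j)⁻¹ := by
  classical
  let P := {p : n.Partition // ∀ j ∈ p.parts, j ∈ T}
  let F : P → (T → ℕ) := fun p j => p.1.parts.count j.1
  have hF : Function.Injective F := by
    intro p q h
    refine Subtype.ext (Nat.Partition.ext ?_)
    refine Multiset.ext.2 fun j => ?_
    by_cases hj : j ∈ T
    · exact congrFun h ⟨j, hj⟩
    · rw [Multiset.count_eq_zero.2 fun hp => hj (p.2 j hp),
        Multiset.count_eq_zero.2 fun hq => hj (q.2 j hq)]
  have hsum : ∀ p : P, ∑ j : T, F p j * j.1 = n := by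
    intro p
    rw [Finset.sum_coe_sort T fun j => p.1.parts.count j * j]
    have := Finset.sum_multiset_count_of_subset p.1.parts T
      fun j hj => p.2 j (Multiset.mem_toFinset.1 hj)
    rw [p.1.parts_sum] at this
    simpa using this.symm
  have hweight : ∀ p : P, ∏ j : T, (x ^ j.1) ^ F p j = x ^ n := by
    intro p
    rw [← hsum p, ← Finset.prod_pow_eq_pow_sum]
    refine Finset.prod_congr rfl fun j _ => ?_
    rw [← pow_mul, mul_comm]
  have hmem : ∀ p : P, F p ∈ Fintype.piFinset fun _ : T => Finset.range (n + 1) := by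
    intro p
    rw [Fintype.mem_piFinset]
    intro j
    rw [Finset.mem_range, Nat.lt_succ_iff]
    calc F p j ≤ F p j * j.1 := Nat.le_mul_of_pos_right _ (hT j.1 j.2)
      _ ≤ ∑ j : T, F p j * j.1 :=
        Finset.single_le_sum (f := fun j : T => F p j * j.1) (fun _ _ => Nat.zero_le _)
          (Finset.mem_univ j)
      _ = n := hsum p
  have hgeom : ∀ j : T, ∑ i ∈ Finset.range (n + 1), (x ^ j.1) ^ i ≤ (1 - x ^ j.1)⁻¹ := by
    intro j
    have hj : x ^ j.1 < 1 := pow_lt_one₀ hx0.le hx1 (Nat.one_le_iff_ne_zero.1 (hT j.1 j.2))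
    rw [le_inv_comm₀ (by positivity) (sub_pos.2 hj), ← one_div, le_div_iff₀ (by positivity),
      mul_comm, geom_sum_mul_neg]
    linarith [pow_pos (pow_pos hx0 j.1) (n + 1)]
  calc (Nat.card P : ℝ) * x ^ n = ∑ p : P, ∏ j : T, (x ^ j.1) ^ F p j := by
        rw [Finset.sum_congr rfl fun p _ => hweight p, Finset.sum_const, Finset.card_univ,
          Nat.card_eq_fintype_card, nsmul_eq_mul]
    _ = ∑ f ∈ Finset.univ.map ⟨F, hF⟩, ∏ j : T, (x ^ j.1) ^ f j := by simp
    _ ≤ ∑ f ∈ Fintype.piFinset fun _ : T => Finset.range (n + 1), ∏ j : T, (x ^ j.1) ^ f j := by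
        refine Finset.sum_le_sum_of_subset_of_nonneg ?_ fun f _ _ => by positivity
        intro f hf
        obtain ⟨p, -, rfl⟩ := Finset.mem_map.1 hf
        exact hmem p
    _ = ∏ j : T, ∑ i ∈ Finset.range (n + 1), (x ^ j.1) ^ i :=
        Finset.sum_prod_piFinset _ fun (j : T) i => (x ^ j.1) ^ i
    _ ≤ ∏ j : T, (1 - x ^ j.1)⁻¹ :=
        Finset.prod_le_prod (fun j _ => by positivity) fun j _ => hgeom j
    _ = ∏ j ∈ T, (1 - x ^ j)⁻¹ := Finset.prod_coe_sort T fun j => (1 - x ^ j)⁻¹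

theorem neg_log_one_sub_pow_anti {x : ℝ} (hx0 : 0 < x) (hx1 : x < 1) {i j : ℕ} (hi : 1 ≤ i)
    (hij : i ≤ j) : -Real.log (1 - x ^ j) ≤ -Real.log (1 - x ^ i) := by
  have h1 : x ^ i < 1 := pow_lt_one₀ hx0.le hx1 (by omega)
  have h2 : x ^ j ≤ x ^ i := pow_le_pow_of_le_one hx0.le hx1.le hij
  exact neg_le_neg (Real.log_le_log (by linarith) (by linarith))

theorem neg_log_one_sub_pow_nonneg {x : ℝ} (hx0 : 0 < x) (hx1 : x < 1) (j : ℕ) :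
    0 ≤ -Real.log (1 - x ^ j) := by
  have h : x ^ j ≤ 1 := pow_le_one₀ hx0.le hx1.le
  exact neg_nonneg.2 (Real.log_nonpos (by linarith) (by linarith [pow_pos hx0 j]))

/-- A residue class modulo `m` contributes at most `π² / 6 * x ^ m / (1 - x ^ m)`, up to its
first term, to the logarithm of the generating function. -/
theorem sum_residue_class_le {x : ℝ} (hx0 : 0 < x) (hx1 : x < 1) {m r : ℕ} (hm : 1 ≤ m)
    (hr : 1 ≤ r) (n : ℕ) (T : Finset ℕ) (hT : ∀ j ∈ T, j ≤ n ∧ j % m = r) :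
    ∑ j ∈ T, -Real.log (1 - x ^ j)
      ≤ Real.pi ^ 2 / 6 * (x ^ m / (1 - x ^ m)) - Real.log (1 - x) := by
  have hinj : Function.Injective fun i : ℕ => r + i * m := by
    intro i j h
    exact Nat.eq_of_mul_eq_mul_right hm (Nat.add_left_cancel h)
  have hsub : T ⊆ (Finset.range (n + 1)).map ⟨fun i => r + i * m, hinj⟩ := by
    intro j hj
    obtain ⟨h1, h2⟩ := hT j hj
    refine Finset.mem_map.2 ⟨j / m, ?_, ?_⟩
    · rw [Finset.mem_range]
      exact lt_of_le_of_lt (Nat.div_le_self j m) (by omega)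
    · simp only [Function.Embedding.coeFn_mk]
      rw [← h2, mul_comm]
      exact Nat.mod_add_div j m
  have hym : x ^ m < 1 := pow_lt_one₀ hx0.le hx1 (by omega)
  calc ∑ j ∈ T, -Real.log (1 - x ^ j)
      ≤ ∑ j ∈ (Finset.range (n + 1)).map ⟨fun i => r + i * m, hinj⟩, -Real.log (1 - x ^ j) :=
        Finset.sum_le_sum_of_subset_of_nonneg hsub
          fun j _ _ => neg_log_one_sub_pow_nonneg hx0 hx1 j
    _ = ∑ i ∈ Finset.range n, -Real.log (1 - x ^ (r + (i + 1) * m))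
          + -Real.log (1 - x ^ r) := by
        rw [Finset.sum_map, Finset.sum_range_succ']
        simp
    _ ≤ ∑ i ∈ Finset.range n, -Real.log (1 - (x ^ m) ^ (i + 1)) + -Real.log (1 - x) := by
        refine add_le_add (Finset.sum_le_sum fun i _ => ?_) ?_
        · rw [← pow_mul, mul_comm m]
          exact neg_log_one_sub_pow_anti hx0 hx1 (Nat.mul_pos i.succ_pos hm)
            (Nat.le_add_left _ _)
        · simpa using neg_log_one_sub_pow_anti hx0 hx1 le_rfl hr
    _ ≤ _ := by
        linarith [sum_neg_log_one_sub_pow_le (pow_pos hx0 m) hym n]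

theorem congCount_mul_pow_le {d a : ℕ} (ha : 1 ≤ a) (had : a < d + 3) {x : ℝ} (hx0 : 0 < x)
    (hx1 : x < 1) (n : ℕ) :
    (congCount d a n : ℝ) * x ^ n ≤
      Real.exp (Real.pi ^ 2 / 3 * (x ^ (d + 3) / (1 - x ^ (d + 3))) - 2 * Real.log (1 - x)) := by
  classical
  let T := (Finset.Icc 1 n).filter fun j => j % (d + 3) = a ∨ j % (d + 3) = d + 3 - a
  have hT : ∀ j ∈ T, 1 ≤ j := fun j hj => (Finset.mem_Icc.1 (Finset.mem_filter.1 hj).1).1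
  have hcong : congCount d a n ≤ Nat.card {p : n.Partition // ∀ j ∈ p.parts, j ∈ T} := by
    refine Nat.card_le_card_of_injective
      (Subtype.map id fun p hp j hj => ?_) (Subtype.map_injective _ Function.injective_id)
    refine Finset.mem_filter.2 ⟨Finset.mem_Icc.2 ⟨p.parts_pos hj, ?_⟩, ?_⟩
    · exact p.parts_sum ▸ Multiset.single_le_sum (fun _ _ => Nat.zero_le _) j hj
    · rcases hp j hj with h | h
      · exact Or.inl (by rw [h, Nat.mod_eq_of_lt had])
      · right
        have hj' := Nat.mod_lt j (show 0 < d + 3 by omega)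
        rw [Nat.ModEq, Nat.zero_mod, Nat.add_mod, Nat.mod_eq_of_lt had] at h
        obtain ⟨c, hc⟩ := Nat.dvd_of_mod_eq_zero h
        have : c = 1 := by
          rcases c with _ | _ | c
          · omega
          · rfl
          · nlinarith
        subst this
        omega
  have hprod : ∏ j ∈ T, (1 - x ^ j)⁻¹ = Real.exp (∑ j ∈ T, -Real.log (1 - x ^ j)) := by
    rw [Real.exp_sum]
    refine Finset.prod_congr rfl fun j hj => ?_
    have h : x ^ j < 1 := pow_lt_one₀ hx0.le hx1 (Nat.one_le_iff_ne_zero.1 (hT j hj))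
    rw [Real.exp_neg, Real.exp_log (sub_pos.2 h)]
  have hsum : ∑ j ∈ T, -Real.log (1 - x ^ j) ≤
      Real.pi ^ 2 / 3 * (x ^ (d + 3) / (1 - x ^ (d + 3))) - 2 * Real.log (1 - x) := by
    rw [← Finset.sum_filter_add_sum_filter_not T fun j => j % (d + 3) = a]
    have h1 := sum_residue_class_le hx0 hx1 (m := d + 3) (by omega) ha n
      (T.filter fun j => j % (d + 3) = a) fun j hj => by
        simp only [T, Finset.mem_filter, Finset.mem_Icc] at hj
        omega
    have h2 := sum_residue_class_le hx0 hx1 (m := d + 3) (r := d + 3 - a) (by omega)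
      (by omega) n (T.filter fun j => ¬ j % (d + 3) = a) fun j hj => by
        simp only [T, Finset.mem_filter, Finset.mem_Icc] at hj
        tauto
    linarith
  calc (congCount d a n : ℝ) * x ^ n
      ≤ (Nat.card {p : n.Partition // ∀ j ∈ p.parts, j ∈ T} : ℝ) * x ^ n := by gcongr
    _ ≤ ∏ j ∈ T, (1 - x ^ j)⁻¹ := card_partition_mul_pow_le hx0 hx1 n T hT
    _ ≤ _ := by
      rw [hprod]
      exact Real.exp_le_exp.2 hsum

theorem congCount_le_exp {d a : ℕ} (ha : 1 ≤ a) (had : a < d + 3) {t : ℝ} (ht : 0 < t) (n : ℕ) :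
    (congCount d a n : ℝ) ≤
      Real.exp (t * n + Real.pi ^ 2 / (3 * (d + 3) * t) + 2 * Real.log (1 + 1 / t)) := by
  have hx1 : Real.exp (-t) < 1 := Real.exp_lt_one_iff.2 (by linarith)
  have h := congCount_mul_pow_le ha had (Real.exp_pos (-t)) hx1 n
  have hquot : ∀ s : ℝ, 0 < s → Real.exp (-s) / (1 - Real.exp (-s)) ≤ 1 / s := by
    intro s hs
    have h1 : Real.exp (-s) < 1 := Real.exp_lt_one_iff.2 (by linarith)
    rw [div_le_div_iff₀ (by linarith) hs]
    have h2 := mul_le_mul_of_nonneg_left (Real.add_one_le_exp s) (Real.exp_pos (-s)).le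
    rw [← Real.exp_add, neg_add_cancel, Real.exp_zero] at h2
    linarith
  have hpow : ∀ k : ℕ, Real.exp (-t) ^ k = Real.exp (-(k * t)) := by
    intro k
    rw [← Real.exp_nat_mul]
    ring_nf
  have h1 : Real.pi ^ 2 / 3 * (Real.exp (-t) ^ (d + 3) / (1 - Real.exp (-t) ^ (d + 3)))
      ≤ Real.pi ^ 2 / (3 * (d + 3) * t) := by
    rw [hpow]
    have := hquot ((d + 3 : ℕ) * t) (by positivity)
    calc _ ≤ Real.pi ^ 2 / 3 * (1 / ((d + 3 : ℕ) * t)) := by gcongr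
      _ = _ := by push_cast; field_simp
  have h2 : -Real.log (1 - Real.exp (-t)) ≤ Real.log (1 + 1 / t) := by
    rw [← Real.log_inv]
    have h3 : (1 - Real.exp (-t))⁻¹ = 1 + Real.exp (-t) / (1 - Real.exp (-t)) := by
      have : 1 - Real.exp (-t) ≠ 0 := by linarith
      field_simp
      ring
    refine Real.log_le_log (inv_pos.2 (by linarith)) ?_
    rw [h3]
    linarith [hquot t ht]
  rw [hpow] at h
  calc (congCount d a n : ℝ)
      = congCount d a n * Real.exp (-(n * t)) * Real.exp (n * t) := by
        rw [mul_assoc, ← Real.exp_add, neg_add_cancel, Real.exp_zero, mul_one]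
    _ ≤ _ * Real.exp (n * t) := mul_le_mul_of_nonneg_right h (Real.exp_pos _).le
    _ ≤ _ := by
        rw [← Real.exp_add]
        refine Real.exp_le_exp.2 ?_
        linarith

theorem log_factorial_le {k : ℕ} (hk : 1 ≤ k) :
    Real.log k.factorial ≤ (k + 1) * Real.log k - k + 1 := by
  induction k, hk using Nat.le_induction with
  | base => simp
  | succ k hk ih =>
    have hk0 : (0 : ℝ) < k := by exact_mod_cast hk
    have hk1 : (0 : ℝ) < (k : ℝ) + 1 := by positivity
    have hlog : 1 / ((k : ℝ) + 1) ≤ Real.log (k + 1) - Real.log k := by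
      have h := Real.one_sub_inv_le_log_of_pos (div_pos hk1 hk0)
      rw [Real.log_div hk1.ne' hk0.ne'] at h
      refine le_trans (le_of_eq ?_) h
      field_simp
      ring
    rw [div_le_iff₀ hk1] at hlog
    rw [Nat.factorial_succ, Nat.cast_mul, Real.log_mul (by positivity) (by positivity)]
    push_cast
    linarith

theorem exp_le_gapCount {d a K n : ℕ} (ha : 1 ≤ a) (hd : 1 ≤ d) (hK : 1 ≤ K)
    (hn : 25 * d * K ^ 2 ≤ 18 * n) (hKa : 72 * a ≤ d * K) :
    Real.exp (K * (2 + Real.log (7 * d / 8)) - Real.log (7 * d / 8) - 4 * Real.log K - 2)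
      ≤ gapCount d a n := by
  obtain ⟨k, rfl⟩ := Nat.exists_eq_add_of_le' hK
  set K := k + 1 with hKk
  have hd0 : (0 : ℝ) < d := by exact_mod_cast hd
  have hK0 : (0 : ℝ) < K := by exact_mod_cast hK
  have hchoose : (K.choose 2 : ℝ) ≤ (K : ℝ) ^ 2 / 2 := by
    rw [Nat.cast_choose_two]
    nlinarith
  have hnR : 25 * d * (K : ℝ) ^ 2 ≤ 18 * n := by exact_mod_cast hn
  have hKaR : 72 * (a : ℝ) ≤ d * K := by exact_mod_cast hKa
  have hdC : (d : ℝ) * K.choose 2 ≤ d * ((K : ℝ) ^ 2 / 2) := by gcongr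
  have hKaK : 72 * (K * (a : ℝ)) ≤ d * (K : ℝ) ^ 2 := by nlinarith
  have hle : K * a + d * K.choose 2 ≤ n := by
    have : (K : ℝ) * a + d * K.choose 2 ≤ n := by nlinarith [mul_pos hd0 (pow_pos hK0 2)]
    exact_mod_cast this
  obtain ⟨N, hN⟩ := Nat.exists_eq_add_of_le' hle
  have hNR : (n : ℝ) = N + (K * a + d * K.choose 2) := by exact_mod_cast hN
  have hNlow : 7 * d / 8 * (K : ℝ) ^ 2 ≤ N := by nlinarith
  have hcount := pow_le_gapCount_mul (d := d) ha N k
  rw [← hKk, add_assoc, ← hN] at hcount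
  have hcountR : (N : ℝ) ^ k ≤ gapCount d a n * (K.factorial * k.factorial) := by
    exact_mod_cast hcount
  have hlow : (0 : ℝ) < 7 * d / 8 * (K : ℝ) ^ 2 := by positivity
  have hN0 : (0 : ℝ) < N := hlow.trans_le hNlow
  have hq0 : (0 : ℝ) < gapCount d a n := by
    by_contra h
    have h' : (gapCount d a n : ℝ) = 0 := le_antisymm (not_lt.1 h) (Nat.cast_nonneg _)
    rw [h', zero_mul] at hcountR
    exact absurd (pow_pos hN0 k) (not_lt.2 hcountR)
  have hlogle := Real.log_le_log (pow_pos hN0 k) hcountR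
  rw [Real.log_pow, Real.log_mul hq0.ne' (by positivity),
    Real.log_mul (by positivity) (by positivity)] at hlogle
  have hlogN : Real.log (7 * d / 8) + 2 * Real.log K ≤ Real.log N := by
    have := Real.log_le_log hlow hNlow
    rwa [Real.log_mul (by positivity) (by positivity), Real.log_pow, Nat.cast_ofNat] at this
  have hlogN' := mul_le_mul_of_nonneg_left hlogN (Nat.cast_nonneg (α := ℝ) k)
  have hfac : Real.log k.factorial ≤ Real.log K.factorial :=
    Real.log_le_log (by positivity) (by exact_mod_cast Nat.factorial_le (Nat.le_succ k))
  have hfacK := log_factorial_le hK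
  rw [← Real.le_log_iff_exp_le hq0]
  have hkK : (k : ℝ) = K - 1 := by rw [hKk]; push_cast; ring
  rw [hkK] at hlogle hlogN'
  linarith

/-- The comparison of the exponential growth rates of the two counting functions. -/
theorem growth_rate_lt {d : ℕ} (hd : 4 ≤ d) :
    2 * √(Real.pi ^ 2 / (3 * (d + 3))) < √(18 / (25 * d)) * (2 + Real.log (7 * d / 8)) := by
  have hd4 : (4 : ℝ) ≤ d := by exact_mod_cast hd
  have hd0 : (0 : ℝ) < d := by linarith
  have hpi : Real.pi ^ 2 < 9.8697 := by
    have := Real.pi_lt_d4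
    nlinarith [Real.pi_pos]
  have hbase : (5 : ℝ) / 4 ≤ Real.log (7 / 2) := by
    have he : Real.exp 5 ≤ (7 / 2 : ℝ) ^ 4 := by
      have h1 := Real.exp_one_lt_d9
      have h5 : Real.exp 5 = Real.exp 1 ^ 5 := by rw [← Real.exp_nat_mul]; norm_num
      rw [h5]
      calc Real.exp 1 ^ 5 ≤ 2.7182818286 ^ 5 := by gcongr
        _ ≤ _ := by norm_num
    have := (Real.le_log_iff_exp_le (by norm_num)).2 he
    rw [Real.log_pow] at this
    push_cast at this
    linarith
  have hsplit : Real.log (7 * d / 8) = Real.log (7 / 2) + Real.log (d / 4) := by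
    rw [← Real.log_mul (by norm_num) (by positivity)]
    ring_nf
  have hlogd : 0 ≤ Real.log ((d : ℝ) / 4) := Real.log_nonneg (by linarith)
  have hkey : 100 * Real.pi ^ 2 * d < 54 * (d + 3) * (2 + Real.log (7 * d / 8)) ^ 2 := by
    suffices ∃ L : ℝ, 0 ≤ L ∧ L ≤ 2 + Real.log (7 * d / 8) ∧
        986.97 * d ≤ 54 * (d + 3) * L ^ 2 by
      obtain ⟨L, hL0, hL, h⟩ := this
      calc 100 * Real.pi ^ 2 * d < 986.97 * d := by gcongr; linarith
        _ ≤ 54 * (d + 3) * L ^ 2 := h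
        _ ≤ _ := by gcongr
    rcases lt_or_ge d 16 with h16 | h16
    · refine ⟨17 / 4 - 4 / d, ?_, ?_, ?_⟩
      · have : 4 / (d : ℝ) ≤ 1 := (div_le_one hd0).2 hd4
        linarith
      · have := Real.one_sub_inv_le_log_of_pos (show (0 : ℝ) < d / 4 by positivity)
        rw [inv_div] at this
        linarith
      · interval_cases d <;> norm_num
    · have h16R : (16 : ℝ) ≤ d := by exact_mod_cast h16
      refine ⟨4.6, by norm_num, ?_, by linarith⟩
      have h4 : Real.log 4 ≤ Real.log (d / 4) := Real.log_le_log (by norm_num) (by linarith)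
      have h2 : Real.log 4 = 2 * Real.log 2 := by
        rw [show (4 : ℝ) = 2 ^ 2 by norm_num, Real.log_pow]
        norm_num
      linarith [Real.log_two_gt_d9]
  have hL0 : 0 ≤ 2 + Real.log (7 * d / 8) := by linarith
  refine lt_of_pow_lt_pow_left₀ 2 (by positivity) ?_
  rw [mul_pow, mul_pow, Real.sq_sqrt (by positivity), Real.sq_sqrt (by positivity),
    mul_div_assoc', div_mul_eq_mul_div, div_lt_div_iff₀ (by positivity) (by positivity)]
  linarith

theorem stmt18 (a d : ℕ) (ha : 1 ≤ a) (hd : 4 ≤ d) (had : a < d + 3)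
    (hgcd : Nat.gcd a (d + 3) = 1) :
    ∀ M : ℕ, ∃ N : ℕ, ∀ n, N ≤ n → congCount d a n + M ≤ gapCount d a n := by
  intro M
  have hd4 : (4 : ℝ) ≤ d := by exact_mod_cast hd
  have hrate := growth_rate_lt hd
  have hB : 0 < Real.pi ^ 2 / (3 * ((d : ℝ) + 3)) := by positivity
  set β := √(Real.pi ^ 2 / (3 * ((d : ℝ) + 3))) with hβ
  set κ := √(18 / (25 * (d : ℝ))) with hκ
  set ℓ := Real.log (7 * d / 8)
  have hβ0 : 0 < β := Real.sqrt_pos.2 hB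
  have hβsq : β ^ 2 = Real.pi ^ 2 / (3 * ((d : ℝ) + 3)) := Real.sq_sqrt hB.le
  have hκ0 : 0 < κ := Real.sqrt_pos.2 (by positivity)
  have hκsq : κ ^ 2 = 18 / (25 * (d : ℝ)) := Real.sq_sqrt (by positivity)
  have hκ1 : κ ≤ 1 := by
    rw [hκ, Real.sqrt_le_one, div_le_one (by positivity)]
    linarith
  have hℓ : 0 ≤ ℓ := Real.log_nonneg (by linarith)
  set δ := κ * (2 + ℓ) - 2 * β with hδ
  have hδ0 : 0 < δ := sub_pos.2 hrate
  set C := 2 * Real.log (1 + 1 / β)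
  have hC : 0 ≤ C := mul_nonneg two_pos.le (Real.log_nonneg (by simp [hβ0.le]))
  have hsqrt : Filter.Tendsto (fun n : ℕ => √(n : ℝ)) Filter.atTop Filter.atTop :=
    Real.tendsto_sqrt_atTop.comp tendsto_natCast_atTop_atTop
  have hlogs : ∀ᶠ s : ℝ in Filter.atTop, Real.log s ≤ δ / 12 * s := by
    filter_upwards [Real.isLittleO_log_id_atTop.bound (show 0 < δ / 12 by positivity),
      Filter.eventually_ge_atTop 0] with s hs hs0
    simpa [abs_of_nonneg hs0] using (le_abs_self _).trans hs
  obtain ⟨N, hN⟩ := Filter.eventually_atTop.1 (hsqrt.eventually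
    ((hlogs.and (Filter.eventually_ge_atTop 1)).and
      ((Filter.eventually_ge_atTop ((72 * a + 1) / κ)).and
        (Filter.eventually_ge_atTop ((C + 4 + 2 * ℓ + M) / (δ / 2))))))
  refine ⟨N, fun n hn => ?_⟩
  obtain ⟨⟨hlog, hs1⟩, hsκ, hsδ⟩ := hN n hn
  set s := √(n : ℝ)
  have hs0 : 0 < s := by linarith
  have hsq : s ^ 2 = n := Real.sq_sqrt (Nat.cast_nonneg n)
  rw [div_le_iff₀ hκ0] at hsκ
  rw [div_le_iff₀ (by positivity)] at hsδ
  have hlog0 : 0 ≤ Real.log s := Real.log_nonneg hs1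
  -- The upper bound, with the saddle point `t = β / s`.
  have hupper : (congCount d a n : ℝ) ≤ Real.exp (2 * β * s + C + 2 * Real.log s) := by
    refine (congCount_le_exp ha had (div_pos hβ0 hs0) n).trans (Real.exp_le_exp.2 ?_)
    have h1 : β / s * n = β * s := by
      rw [← hsq]
      field_simp
    have h2 : Real.pi ^ 2 / (3 * (d + 3) * (β / s)) = β * s := by
      rw [← div_div, ← hβsq]
      field_simp
    have h3 : Real.log (1 + 1 / (β / s)) ≤ Real.log (1 + 1 / β) + Real.log s := by
      rw [← Real.log_mul (by positivity) hs0.ne']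
      refine Real.log_le_log (by positivity) ?_
      rw [one_div_div, add_mul, one_mul, one_div_mul_eq_div]
      linarith
    rw [h1, h2]
    linarith
  -- The lower bound, from the partitions with `⌊κ s⌋` parts.
  have hlower : Real.exp (κ * (2 + ℓ) * s - 4 * Real.log s - (4 + 2 * ℓ)) ≤ gapCount d a n := by
    have hfloor := Nat.floor_le (mul_pos hκ0 hs0).le
    have hfloor' := Nat.lt_floor_add_one (κ * s)
    set K := ⌊κ * s⌋₊
    have hKa : 72 * (a : ℝ) ≤ K := by linarith
    have hKaN : 72 * a ≤ K := by exact_mod_cast hKa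
    have hK1 : 1 ≤ K := by omega
    have hK0 : (0 : ℝ) < K := by exact_mod_cast hK1
    have hnK : 25 * d * K ^ 2 ≤ 18 * n := by
      have hK2 : (K : ℝ) ^ 2 ≤ 18 / (25 * d) * n := by
        rw [← hκsq, ← hsq, ← mul_pow]
        gcongr
      rw [div_mul_eq_mul_div, le_div_iff₀ (by positivity)] at hK2
      have : 25 * d * (K : ℝ) ^ 2 ≤ 18 * n := by linarith
      exact_mod_cast this
    refine le_trans (Real.exp_le_exp.2 ?_)
      (exp_le_gapCount ha (by omega) hK1 hnK (hKaN.trans (Nat.le_mul_of_pos_left K (by omega))))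
    have hlogK : Real.log K ≤ Real.log s := Real.log_le_log hK0 (by nlinarith)
    have hKmul : (κ * s - 1) * (2 + ℓ) ≤ K * (2 + ℓ) := by
      refine mul_le_mul_of_nonneg_right ?_ (by linarith)
      linarith
    linarith
  have hgap : (M : ℝ) + (2 * β * s + C + 2 * Real.log s)
      ≤ κ * (2 + ℓ) * s - 4 * Real.log s - (4 + 2 * ℓ) := by
    have : κ * (2 + ℓ) * s = δ * s + 2 * β * s := by rw [hδ]; ring
    linarith
  have hreal : (congCount d a n : ℝ) + M ≤ gapCount d a n := by
    refine le_trans ?_ ((Real.exp_le_exp.2 hgap).trans hlower)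
    rw [Real.exp_add]
    have hM := Real.add_one_le_exp (M : ℝ)
    have hE : 1 ≤ Real.exp (2 * β * s + C + 2 * Real.log s) := Real.one_le_exp (by positivity)
    have hM0 : (0 : ℝ) ≤ M := Nat.cast_nonneg M
    nlinarith
  exact_mod_cast hreal
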